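/- arXiv:2002.02990 — 3 statements merged into one kernel-verified Lean document; each statement's English description precedes it below -/
import Mathlib

section
/- Let r ≥ 1 be an integer, let C_i denote the i-th Catalan number, and let F_r(X) = X^r - Σ_{i=1}^{r} C_{i-1}·X^{r-i} over ℂ, with roots ξ : Fin r → ℂ listed with multiplicity, i.e., F_r(X) = Π_{j=1}^{r} (X - ξ_j). Let t : ℤ → ℤ satisfy t(m) = 0 for m < 0, t(0) = 1, and t(m) = Σ_{i=1}^{r} C_{i-1}·t(m-i) for all m ≥ 1, and define t̃ : ℤ → ℤ by t̃(m) = Σ_{i=1}^{r} i·C_{i-1}·t(m-i). Then for every integer n ≥ 1, t̃(n) (viewed in ℂ) equals the power sum Σ_{j=1}^{r} ξ_j^{n}. -/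
open PowerSeries in
/-- Convolution of a polynomial with a sequence on `ℤ` supported on the nonnegative integers. -/
lemma coeff_sum_C_mul_X_pow_mul_mk {R : Type*} [CommRing R] (s : Finset ℕ) (a : ℕ → R)
    (u : ℤ → R) (hu : ∀ m < 0, u m = 0) (n : ℕ) :
    coeff n ((∑ i ∈ s, C (a i) * X ^ i) * PowerSeries.mk fun k : ℕ => u k) =
      ∑ i ∈ s, a i * u ((n : ℤ) - i) := by
  rw [Finset.sum_mul, map_sum]
  refine Finset.sum_congr rfl fun i _ => ?_
  rw [mul_assoc, coeff_C_mul, coeff_X_pow_mul']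
  split_ifs with h
  · rw [coeff_mk, Nat.cast_sub h]
  · rw [hu _ (by omega)]

open PowerSeries in
lemma one_sub_C_mul_X_mul_mk_pow {R : Type*} [CommRing R] (a : R) :
    (1 - C a * X) * PowerSeries.mk (fun n => a ^ n) = 1 := by
  ext n
  cases n with
  | zero => simp [sub_mul, mul_assoc]
  | succ n =>
    simp [sub_mul, mul_assoc, coeff_succ_X_mul, coeff_one, pow_succ', -map_pow]

open PowerSeries in
/-- The logarithmic derivative of `∏ (1 - ξ_j X)` generates the power sums of the `ξ_j`. -/
lemma derivative_prod_one_sub_C_mul_X {R ι : Type*} [CommRing R] (s : Finset ι) (ξ : ι → R) :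
    PowerSeries.derivative R (∏ j ∈ s, (1 - C (ξ j) * X)) =
      -((∏ j ∈ s, (1 - C (ξ j) * X)) *
        ∑ j ∈ s, C (ξ j) * PowerSeries.mk fun n => ξ j ^ n) := by
  classical
  induction s using Finset.induction_on with
  | empty => simp
  | insert b s hb ih =>
    have hd : PowerSeries.derivative R (1 - C (ξ b) * X) = -C (ξ b) := by
      simp [Derivation.leibniz, derivative_C, derivative_X]
    rw [Finset.prod_insert hb, Finset.sum_insert hb, Derivation.leibniz, ih, hd]
    simp only [smul_eq_mul]
    linear_combination (C (ξ b) * ∏ j ∈ s, (1 - C (ξ j) * X)) * one_sub_C_mul_X_mul_mk_pow (ξ b)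

open Polynomial in
/-- Reversing the factorization of a monic polynomial over an infinite field. -/
lemma one_sub_sum_C_mul_X_pow_eq_prod {K : Type*} [Field K] [Infinite K] (r : ℕ) (a : ℕ → K)
    (ξ : Fin r → K)
    (h : ∀ x : K, x ^ r - ∑ i ∈ Finset.Icc 1 r, a i * x ^ (r - i) = ∏ j, (x - ξ j)) :
    (1 - ∑ i ∈ Finset.Icc 1 r, C (a i) * X ^ i : K[X]) = ∏ j, (1 - C (ξ j) * X) := by
  refine Polynomial.funext fun x => ?_
  simp only [eval_sub, eval_one, eval_finsetSum, eval_mul, eval_C, eval_pow, eval_X, eval_prod]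
  rcases eq_or_ne x 0 with rfl | hx
  · have : ∑ i ∈ Finset.Icc 1 r, a i * (0 : K) ^ i = 0 :=
      Finset.sum_eq_zero fun i hi => by
        rw [zero_pow (by have := Finset.mem_Icc.mp hi; omega), mul_zero]
    simp [this]
  · have hprod : ∏ j, (1 - ξ j * x) = x ^ r * ∏ j, (x⁻¹ - ξ j) := by
      rw [← Fin.prod_const, ← Finset.prod_mul_distrib]
      refine Finset.prod_congr rfl fun j _ => ?_
      field_simp
    rw [hprod, ← h, mul_sub, ← mul_pow, mul_inv_cancel₀ hx, one_pow, Finset.mul_sum]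
    congr 1
    refine Finset.sum_congr rfl fun i hi => ?_
    have hi' := (Finset.mem_Icc.mp hi).2
    rw [inv_pow, ← Nat.sub_add_cancel hi', Nat.add_sub_cancel, pow_add]
    field_simp

/-- Proposition 3.9(2): `t̃ r n` equals the `n`-th power sum of the roots of the
polynomial `F_r(X) = X^r - ∑_{i=1}^r C_{i-1} X^{r-i}`. -/
theorem tilde_t_eq_power_sum (r : ℕ) (hr : 1 ≤ r)
    (ξ : Fin r → ℂ)
    (hξ : ∀ X : ℂ,
      X ^ r - ∑ i ∈ Finset.Icc 1 r, (catalan (i - 1) : ℂ) * X ^ (r - i) =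
        ∏ j : Fin r, (X - ξ j))
    (t : ℤ → ℤ)
    (ht_neg : ∀ m : ℤ, m < 0 → t m = 0)
    (ht_zero : t 0 = 1)
    (ht_rec : ∀ m : ℤ, 1 ≤ m →
      t m = ∑ i ∈ Finset.Icc 1 r, (catalan (i - 1) : ℤ) * t (m - (i : ℤ)))
    (ttilde : ℤ → ℤ)
    (httilde : ∀ m : ℤ,
      ttilde m = ∑ i ∈ Finset.Icc 1 r, (i : ℤ) * (catalan (i - 1) : ℤ) * t (m - (i : ℤ))) :
    ∀ n : ℕ, 1 ≤ n → (ttilde (n : ℤ) : ℂ) = ∑ j : Fin r, ξ j ^ n := by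
  intro n hn
  let a : ℕ → ℂ := fun i => (catalan (i - 1) : ℂ)
  let u : ℤ → ℂ := fun m => (t m : ℂ)
  have hu : ∀ m < 0, u m = 0 := fun m hm => by simp [u, ht_neg m hm]
  let A : PowerSeries ℂ := ∑ i ∈ Finset.Icc 1 r, PowerSeries.C (a i) * PowerSeries.X ^ i
  let T : PowerSeries ℂ := PowerSeries.mk fun k : ℕ => u k
  have hprod : 1 - A = ∏ j, (1 - PowerSeries.C (ξ j) * PowerSeries.X) := by
    have := congrArg (Polynomial.coeToPowerSeries.ringHom (R := ℂ))
      (one_sub_sum_C_mul_X_pow_eq_prod r a ξ hξ)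
    simp only [map_sub, map_one, map_sum, map_prod, map_mul, map_pow] at this
    simpa [A] using this
  have hT : (1 - A) * T = 1 := by
    ext m
    rw [sub_mul, one_mul, map_sub, coeff_sum_C_mul_X_pow_mul_mk _ a u hu, PowerSeries.coeff_mk,
      PowerSeries.coeff_one]
    rcases Nat.eq_zero_or_pos m with rfl | hm
    · have : ∑ i ∈ Finset.Icc 1 r, a i * u (((0 : ℕ) : ℤ) - i) = 0 :=
        Finset.sum_eq_zero fun i hi => by
          rw [hu _ (by have := Finset.mem_Icc.mp hi; omega), mul_zero]
      rw [this]
      simp [u, ht_zero]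
    · rw [if_neg hm.ne', sub_eq_zero]
      simp only [u, a]
      rw [ht_rec m (by omega)]
      push_cast
      rfl
  have hA : PowerSeries.X * PowerSeries.derivative ℂ A =
      ∑ i ∈ Finset.Icc 1 r, PowerSeries.C ((i : ℂ) * a i) * PowerSeries.X ^ i := by
    simp only [A, map_sum, Finset.mul_sum]
    refine Finset.sum_congr rfl fun i hi => ?_
    obtain ⟨k, rfl⟩ := Nat.exists_eq_add_of_le' (Finset.mem_Icc.mp hi).1
    simp [Derivation.leibniz, Derivation.leibniz_pow, PowerSeries.derivative_C,
      PowerSeries.derivative_X]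
    ring
  have hlog : PowerSeries.X * PowerSeries.derivative ℂ A * T =
      PowerSeries.X * ∑ j, PowerSeries.C (ξ j) * PowerSeries.mk fun k => ξ j ^ k := by
    have hd := derivative_prod_one_sub_C_mul_X Finset.univ ξ
    rw [← hprod, map_sub, Derivation.map_one_eq_zero, zero_sub, neg_inj] at hd
    rw [hd]
    linear_combination (PowerSeries.X *
      ∑ j, PowerSeries.C (ξ j) * PowerSeries.mk fun k => ξ j ^ k) * hT
  have hcoeff := congrArg (PowerSeries.coeff n) hlog
  rw [hA, coeff_sum_C_mul_X_pow_mul_mk _ _ u hu] at hcoeff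
  obtain ⟨k, rfl⟩ := Nat.exists_eq_add_of_le' hn
  rw [PowerSeries.coeff_succ_X_mul, map_sum] at hcoeff
  simp only [PowerSeries.coeff_C_mul, PowerSeries.coeff_mk, ← pow_succ'] at hcoeff
  rw [← hcoeff, httilde]
  push_cast
  rfl
end

section
/- Let r ≥ 1 be an integer and let C_i denote the i-th Catalan number. Let t : ℤ → ℤ satisfy t(m) = 0 for m < 0, t(0) = 1, and t(m) = Σ_{i=1}^{r} C_{i-1}·t(m-i) for all m ≥ 1. Let s : ℤ → ℤ satisfy s(m) = 0 for m < 0 and s(n) = Σ_{i=1}^{n} t(i-1)·s(n-i) + t(n) for all n ≥ 0. Then for every integer n ≥ 1 one has s(n) = 2·s(n-1) + Σ_{i=2}^{r} C_{i-1}·s(n-i). (This is Asai's recurrence for the number of support τ-tilting modules over the linear Nakayama algebra K A_n / rad^r.) -/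
open PowerSeries in
/-- Multiplying the generating function of a sequence supported on `ℕ` by `X ^ i` shifts it by `i`. -/
theorem coeff_X_pow_mul_mk_of_neg {R : Type*} [Semiring R] {f : ℤ → R}
    (hf : ∀ m < 0, f m = 0) (n i : ℕ) :
    coeff n (X ^ i * mk fun k : ℕ => f k) = f ((n : ℤ) - i) := by
  rw [coeff_X_pow_mul']
  split_ifs with h
  · rw [coeff_mk, Nat.cast_sub h]
  · exact (hf _ (by lia)).symm

open PowerSeries in
theorem coeff_sum_C_mul_X_pow_mul_mk_of_neg {R : Type*} [Semiring R] {f : ℤ → R}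
    (hf : ∀ m < 0, f m = 0) (c : ℕ → R) (A : Finset ℕ) (n : ℕ) :
    coeff n ((∑ i ∈ A, C (c i) * X ^ i) * mk fun k : ℕ => f k) =
      ∑ i ∈ A, c i * f ((n : ℤ) - i) := by
  simp only [Finset.sum_mul, map_sum, mul_assoc, coeff_C_mul, coeff_X_pow_mul_mk_of_neg hf]

open PowerSeries in
theorem coeff_X_mul_mk_mul_mk {R : Type*} [Semiring R] (f g : ℤ → R) (n : ℕ) :
    coeff n (X * ((mk fun k : ℕ => f k) * mk fun k : ℕ => g k)) =
      ∑ i ∈ Finset.Icc 1 n, f ((i : ℤ) - 1) * g ((n : ℤ) - i) := by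
  cases n with
  | zero => simp
  | succ n =>
    rw [coeff_succ_X_mul, coeff_mul, Finset.Nat.sum_antidiagonal_eq_sum_range_succ_mk,
      Finset.range_eq_Ico, ← Finset.Ico_add_one_right_eq_Icc,
      ← Finset.sum_Ico_add' _ 0 (n + 1) 1]
    refine Finset.sum_congr rfl fun i hi => ?_
    have hi : i ≤ n := by simp at hi; lia
    simp [Nat.cast_sub hi]

open PowerSeries in
/-- Proposition 4.1 (Asai's Theorem 4.1(1)): the number of support τ-tilting modules
over `K A_n / rad^r` satisfies `s(n) = 2 s(n-1) + ∑_{i=2}^r C_{i-1} s(n-i)`. -/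
theorem s_recurrence (r : ℕ) (hr : 1 ≤ r)
    (t : ℤ → ℤ)
    (ht_neg : ∀ m : ℤ, m < 0 → t m = 0)
    (ht_zero : t 0 = 1)
    (ht_rec : ∀ m : ℤ, 1 ≤ m →
      t m = ∑ i ∈ Finset.Icc 1 r, (catalan (i - 1) : ℤ) * t (m - (i : ℤ)))
    (s : ℤ → ℤ)
    (hs_neg : ∀ m : ℤ, m < 0 → s m = 0)
    (hs_conv : ∀ n : ℕ,
      s (n : ℤ) = ∑ i ∈ Finset.Icc 1 n, t ((i : ℤ) - 1) * s ((n : ℤ) - (i : ℤ)) + t (n : ℤ)) :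
    ∀ n : ℤ, 1 ≤ n →
      s n = 2 * s (n - 1) + ∑ i ∈ Finset.Icc 2 r, (catalan (i - 1) : ℤ) * s (n - (i : ℤ)) := by
  intro n hn
  lift n to ℕ using by lia
  have hn0 : n ≠ 0 := by lia
  set T : ℤ⟦X⟧ := mk fun k : ℕ => t k with hT
  set S : ℤ⟦X⟧ := mk fun k : ℕ => s k with hS
  set P : ℤ⟦X⟧ := ∑ i ∈ Finset.Icc 1 r, C (catalan (i - 1) : ℤ) * X ^ i
  have hcoeffP {f : ℤ → ℤ} (hf : ∀ m < 0, f m = 0) (m : ℕ) :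
      coeff m (P * mk fun k : ℕ => f k) =
        ∑ i ∈ Finset.Icc 1 r, (catalan (i - 1) : ℤ) * f ((m : ℤ) - i) :=
    coeff_sum_C_mul_X_pow_mul_mk_of_neg hf (fun i => (catalan (i - 1) : ℤ)) _ m
  have hTP : T = 1 + P * T := by
    ext m
    rw [map_add, hcoeffP ht_neg, coeff_one, hT, coeff_mk]
    split_ifs with hm
    · rw [hm, Nat.cast_zero, ht_zero, Finset.sum_eq_zero, add_zero]
      intro i hi
      rw [ht_neg _ (by have := (Finset.mem_Icc.mp hi).1; lia), mul_zero]
    · rw [zero_add, ht_rec _ (by lia)]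
  have hST : S = X * (T * S) + T := by
    ext m
    rw [map_add, coeff_X_mul_mk_mul_mk, hS, hT, coeff_mk, coeff_mk, hs_conv]
  have hSP : S = 1 + P * S + X ^ 1 * S := by
    linear_combination (1 - P) * hST + (X * S + 1) * hTP
  have key := congrArg (coeff n) hSP
  rw [map_add, map_add, hcoeffP hs_neg, coeff_X_pow_mul_mk_of_neg hs_neg, coeff_one, if_neg hn0,
    hS, coeff_mk, ← Finset.add_sum_Ioc_eq_sum_Icc hr, ← Finset.Icc_add_one_left_eq_Ioc] at key
  simp only [Nat.sub_self, catalan_zero, Nat.cast_one] at key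
  linear_combination key
end

section
/- Let r ≥ 1 be an integer and let C_i denote the i-th Catalan number. Let t : ℤ → ℤ satisfy t(m) = 0 for m < 0, t(0) = 1, and t(m) = Σ_{i=1}^{r} C_{i-1}·t(m-i) for all m ≥ 1. Let s : ℤ → ℤ satisfy s(m) = 0 for m < 0 and s(n) = Σ_{i=1}^{n} t(i-1)·s(n-i) + t(n) for all n ≥ 0. Define t̃ : ℤ → ℤ by t̃(m) = Σ_{i=1}^{r} i·C_{i-1}·t(m-i), and let s̃ : ℤ → ℤ satisfy s̃(m) = 0 for m ≤ 0 and s̃(n) = Σ_{ℓ=1}^{n-1} ℓ·t(ℓ-1)·s(n-ℓ-1) + n·t(n-1) + t̃(n) for all n ≥ 1. Then for every integer n ≥ r+1 one has s̃(n) = 2·s̃(n-1) + Σ_{i=2}^{r} C_{i-1}·s̃(n-i). (This is Asai's recurrence for the number of support τ-tilting modules over the cyclic Nakayama algebra K Ã_n / rad^r.) -/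
open PowerSeries in
/-- Multiplying by a finite sum of monomials convolves the coefficient sequence, provided the
sequence is extended by zero to negative indices. -/
theorem coeff_sum_monomial_mul_mk (f : ℤ → ℤ) (hf : ∀ m : ℤ, m < 0 → f m = 0)
    (c : ℕ → ℤ) (I : Finset ℕ) (n : ℕ) :
    coeff n ((∑ i ∈ I, monomial i (c i)) * (mk fun k : ℕ => f k)) =
      ∑ i ∈ I, c i * f ((n : ℤ) - i) := by
  rw [Finset.sum_mul, map_sum]
  refine Finset.sum_congr rfl fun i _ => ?_
  rw [monomial_eq_C_mul_X_pow, mul_assoc, coeff_C_mul, coeff_X_pow_mul']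
  split_ifs with h
  · rw [coeff_mk, Nat.cast_sub h]
  · rw [hf _ (by omega)]

open PowerSeries in
/-- Coefficients of a product, with the summation index shifted to start at `1`. -/
theorem coeff_mk_mul_mk_eq_sum_Icc (f g : ℤ → ℤ) (n : ℕ) :
    coeff n ((mk fun k : ℕ => f k) * (mk fun k : ℕ => g k)) =
      ∑ i ∈ Finset.Icc 1 (n + 1), f ((i : ℤ) - 1) * g ((n : ℤ) + 1 - i) := by
  rw [coeff_mul, Finset.Nat.sum_antidiagonal_eq_sum_range_succ_mk, Finset.range_eq_Ico,
    Finset.sum_Ico_eq_sum_range, ← Finset.Ico_succ_right_eq_Icc, Finset.sum_Ico_eq_sum_range]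
  refine Finset.sum_congr rfl fun i hi => ?_
  have hi' : i ≤ n := by simp at hi; omega
  simp only [coeff_mk, zero_add]
  rw [Nat.cast_sub hi']
  push_cast
  congr 2 <;> ring_nf

/-- Proposition 4.3 (Asai's Theorem 4.1(2)): the number of support τ-tilting modules
over the cyclic Nakayama algebra `K Ã_n / rad^r` satisfies
`s̃(n) = 2 s̃(n-1) + ∑_{i=2}^r C_{i-1} s̃(n-i)`. -/
theorem tilde_s_recurrence (r : ℕ) (hr : 1 ≤ r)
    (t : ℤ → ℤ)
    (ht_neg : ∀ m : ℤ, m < 0 → t m = 0)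
    (ht_zero : t 0 = 1)
    (ht_rec : ∀ m : ℤ, 1 ≤ m →
      t m = ∑ i ∈ Finset.Icc 1 r, (catalan (i - 1) : ℤ) * t (m - (i : ℤ)))
    (s : ℤ → ℤ)
    (hs_neg : ∀ m : ℤ, m < 0 → s m = 0)
    (hs_conv : ∀ n : ℕ,
      s (n : ℤ) = ∑ i ∈ Finset.Icc 1 n, t ((i : ℤ) - 1) * s ((n : ℤ) - (i : ℤ)) + t (n : ℤ))
    (ttilde : ℤ → ℤ)
    (httilde : ∀ m : ℤ,
      ttilde m = ∑ i ∈ Finset.Icc 1 r, (i : ℤ) * (catalan (i - 1) : ℤ) * t (m - (i : ℤ)))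
    (stilde : ℤ → ℤ)
    (hstilde_nonpos : ∀ m : ℤ, m ≤ 0 → stilde m = 0)
    (hstilde : ∀ n : ℕ, 1 ≤ n →
      stilde (n : ℤ) =
        ∑ l ∈ Finset.Icc 1 (n - 1), (l : ℤ) * t ((l : ℤ) - 1) * s ((n : ℤ) - (l : ℤ) - 1) +
          (n : ℤ) * t ((n : ℤ) - 1) + ttilde (n : ℤ)) :
    ∀ n : ℤ, (r : ℤ) + 1 ≤ n →
      stilde n =
        2 * stilde (n - 1) +
          ∑ i ∈ Finset.Icc 2 r, (catalan (i - 1) : ℤ) * stilde (n - (i : ℤ)) := by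
  classical
  set c : ℕ → ℤ := fun i => (catalan (i - 1) : ℤ) with hc
  set P : PowerSeries ℤ := ∑ i ∈ Finset.Icc 1 r, PowerSeries.monomial i (c i) with hP
  set Q : PowerSeries ℤ := ∑ i ∈ Finset.Icc 1 r, PowerSeries.monomial i ((i : ℤ) * c i) with hQ
  set T : PowerSeries ℤ := PowerSeries.mk fun k : ℕ => t k with hT
  set S : PowerSeries ℤ := PowerSeries.mk fun k : ℕ => s k with hS
  set A : PowerSeries ℤ := PowerSeries.mk fun k : ℕ => (k : ℤ) * t ((k : ℤ) - 1) with hA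
  set U : PowerSeries ℤ := PowerSeries.mk fun k : ℕ => stilde k with hU
  set E : PowerSeries ℤ := PowerSeries.X * PowerSeries.derivative ℤ T with hE
  have hTP : T * (1 - P) = 1 := by
    have : T = P * T + 1 := by
      ext n
      rw [map_add, coeff_sum_monomial_mul_mk t ht_neg, PowerSeries.coeff_mk,
        PowerSeries.coeff_one]
      rcases n with _ | n
      · rw [Finset.sum_eq_zero]
        · simp [ht_zero]
        · intro i hi
          rw [Finset.mem_Icc] at hi
          rw [ht_neg _ (by omega), mul_zero]
      · rw [ht_rec _ (by omega)]
        simp [hc]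
    linear_combination this
  have hQP : Q = PowerSeries.X * PowerSeries.derivative ℤ P := by
    rw [hP, hQ, map_sum, Finset.mul_sum]
    refine Finset.sum_congr rfl fun i _ => ?_
    ext n
    rcases n with _ | n
    · rcases eq_or_ne i 0 with rfl | hi
      · simp
      · simp [PowerSeries.coeff_monomial, hi.symm]
    · rw [PowerSeries.coeff_succ_X_mul, PowerSeries.coeff_derivative,
        PowerSeries.coeff_monomial, PowerSeries.coeff_monomial]
      split_ifs with h
      · subst h
        push_cast
        ring
      · ring
  have hEP : E * (1 - P) = T * Q := by
    have h := congrArg (PowerSeries.derivative ℤ) hTP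
    simp only [Derivation.leibniz, map_sub, Derivation.map_one_eq_zero, smul_eq_mul] at h
    rw [hE, hQP]
    linear_combination PowerSeries.X * h
  have hSconv : S = PowerSeries.X * (T * S) + T := by
    ext n
    rw [map_add, hS, PowerSeries.coeff_mk, hs_conv]
    rcases n with _ | n
    · simp [hT]
    · rw [PowerSeries.coeff_succ_X_mul, coeff_mk_mul_mk_eq_sum_Icc, PowerSeries.coeff_mk]
      push_cast
      rfl
  have hAE : A = PowerSeries.X * (T + E) := by
    ext n
    rcases n with _ | n
    · simp [hA]
    · rw [PowerSeries.coeff_succ_X_mul, map_add, hA, hE, hT, PowerSeries.coeff_mk,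
        PowerSeries.coeff_mk]
      rcases n with _ | n
      · simp
      · rw [PowerSeries.coeff_succ_X_mul, PowerSeries.coeff_derivative, PowerSeries.coeff_mk]
        push_cast
        rw [add_sub_cancel_right]
        ring
  have hUeq : U = PowerSeries.X * (A * S) + A + Q * T := by
    ext n
    rw [map_add, map_add, coeff_sum_monomial_mul_mk t ht_neg, ← httilde, hU, hA, hS,
      PowerSeries.coeff_mk, PowerSeries.coeff_mk]
    rcases n with _ | n
    · rw [hstilde_nonpos _ (by simp), httilde, Finset.sum_eq_zero]
      · simp
      · intro i hi
        rw [Finset.mem_Icc] at hi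
        rw [ht_neg _ (by omega), mul_zero]
    · rw [PowerSeries.coeff_succ_X_mul, hstilde _ (by omega), PowerSeries.coeff_mul,
        Finset.Nat.sum_antidiagonal_eq_sum_range_succ_mk, Finset.sum_range_succ',
        Nat.add_sub_cancel, ← Finset.Ico_succ_right_eq_Icc, Finset.sum_Ico_eq_sum_range]
      congr 2
      simp only [PowerSeries.coeff_mk, Nat.cast_zero, zero_mul, add_zero]
      refine Finset.sum_congr rfl fun i hi => ?_
      have hi' : i + 1 ≤ n := by simp at hi; omega
      rw [Nat.cast_sub hi']
      push_cast
      congr 2 <;> ring_nf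
  have hSP : S * (1 - P - PowerSeries.X) = 1 := by
    linear_combination (1 - P) * hSconv + (PowerSeries.X * S + 1) * hTP
  have hUP : U = P * U + PowerSeries.X * U + PowerSeries.X + Q := by
    linear_combination (1 - P - PowerSeries.X) * hUeq + PowerSeries.X * A * hSP +
      (1 - P) * hAE + PowerSeries.X * hTP + PowerSeries.X * hEP + Q * hTP
  intro n hn
  lift n to ℕ using by omega
  obtain ⟨n, rfl⟩ : ∃ k, n = k + 1 := ⟨n - 1, by omega⟩
  have h := congrArg (PowerSeries.coeff (n + 1)) hUP
  have hQcoeff : PowerSeries.coeff (n + 1) Q = 0 := by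
    rw [hQ, map_sum]
    refine Finset.sum_eq_zero fun i hi => ?_
    rw [Finset.mem_Icc] at hi
    rw [PowerSeries.coeff_monomial, if_neg (by omega)]
  rw [map_add, map_add, map_add, hQcoeff, PowerSeries.coeff_X, if_neg (by omega),
    PowerSeries.coeff_succ_X_mul, coeff_sum_monomial_mul_mk stilde
      (fun m hm => hstilde_nonpos m hm.le), PowerSeries.coeff_mk, PowerSeries.coeff_mk,
    ← Finset.add_sum_Ioc_eq_sum_Icc hr] at h
  rw [h, ← Finset.Icc_add_one_left_eq_Ioc]
  simp only [hc, Nat.sub_self, catalan_zero, Nat.cast_add, Nat.cast_one, add_sub_cancel_right,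
    Nat.reduceAdd]
  ring
end
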